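/- Let ~ be the smallest monoid congruence on the free monoid over Θ generated by the relations cC = ∅, hH = ∅, cF = ∅, hF = ∅ (a burger immediately followed by a matching order cancels to the empty word) and cH = Hc, hC = Ch (a burger commutes with the opposite-type order). Then every finite word W over Θ is equivalent under ~ to exactly one reduced word; consequently the quotient monoid is in bijection with the set of reduced words. -/

import Mathlib

open MeasureTheory ProbabilityTheory Filter Topology
open scoped ENNReal NNReal

/-- The five-symbol alphabet Θ: cheeseburger, hamburger, cheeseburger order,
hamburger order, flexible order. -/
inductive Burger where
  | c | h | C | H | F
deriving DecidableEq

instance : MeasurableSpace Burger := ⊤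

namespace Burger

/-- `true` iff the symbol is a burger (`c` or `h`). -/
def isBurgerSym : Burger → Bool
  | c => true
  | h => true
  | _ => false

/-- `true` iff the symbol is an order (`C`, `H` or `F`). -/
def isOrderSym (s : Burger) : Bool := !s.isBurgerSym

/-- One reduction step acting on a state `(O, B)` where `O` is the list of unfulfilled
orders (most recent first) and `B` is the burger stack (top first). -/
def stepRev (s : List Burger × List Burger) (x : Burger) : List Burger × List Burger :=
  match x with
  | .c => (s.1, .c :: s.2)
  | .h => (s.1, .h :: s.2)
  | .C => if Burger.c ∈ s.2 then (s.1, s.2.erase .c) else (.C :: s.1, s.2)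
  | .H => if Burger.h ∈ s.2 then (s.1, s.2.erase .h) else (.H :: s.1, s.2)
  | .F => if s.2 = [] then (.F :: s.1, s.2) else (s.1, s.2.tail)

/-- The reduced word `W̄` of a word `W`: the unfulfilled orders (in order of
appearance) followed by the unconsumed burgers (in order of appearance). -/
def reduce (w : List Burger) : List Burger :=
  let s := w.foldl stepRev ([], [])
  s.1.reverse ++ s.2.reverse

/-- A word is reduced if no burger symbol appears to the left of any order symbol,
i.e. it is a list of orders followed by a list of burgers. -/
def IsReduced (w : List Burger) : Prop :=
  ∃ o b : List Burger, w = o ++ b ∧ (∀ x ∈ o, x.isOrderSym) ∧ (∀ x ∈ b, x.isBurgerSym)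

/-- The word `X(a) X(a+1) ⋯ X(b)`. -/
def word (X : ℤ → Burger) (a b : ℤ) : List Burger :=
  (List.range (b + 1 - a).toNat).map fun i => X (a + i)

/-- The reduced word `X(a,b)`. -/
def rword (X : ℤ → Burger) (a b : ℤ) : List Burger := reduce (word X a b)

/-- `matched X m n` : the burger produced at time `m` is consumed by the order at time `n`;
i.e. `X m ∈ {c,h}` and `n` is the smallest integer `> m` such that the reduced word
`X(m,n)` contains no burger symbol of the same type as `X m`. -/
def matched (X : ℤ → Burger) (m n : ℤ) : Prop :=
  m < n ∧ (X m = .c ∨ X m = .h) ∧ X m ∉ rword X m n ∧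
    ∀ k, m < k → k < n → X m ∈ rword X m k

/-- The generating relations: a burger immediately followed by a matching order cancels,
and a burger commutes with the opposite-type order. -/
def burgerRel : FreeMonoid Burger → FreeMonoid Burger → Prop := fun x y =>
  (x = FreeMonoid.ofList [Burger.c, Burger.C] ∧ y = 1) ∨
  (x = FreeMonoid.ofList [Burger.h, Burger.H] ∧ y = 1) ∨
  (x = FreeMonoid.ofList [Burger.c, Burger.F] ∧ y = 1) ∨
  (x = FreeMonoid.ofList [Burger.h, Burger.F] ∧ y = 1) ∨
  (x = FreeMonoid.ofList [Burger.c, Burger.H] ∧ y = FreeMonoid.ofList [Burger.H, Burger.c]) ∨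
  (x = FreeMonoid.ofList [Burger.h, Burger.C] ∧ y = FreeMonoid.ofList [Burger.C, Burger.h])

end Burger

open Burger

namespace Burger

/-- Image of a list in the quotient monoid. -/
def qv (l : List Burger) : (conGen burgerRel).Quotient :=
  ((FreeMonoid.ofList l : FreeMonoid Burger) : (conGen burgerRel).Quotient)

theorem qv_append (a b : List Burger) : qv (a ++ b) = qv a * qv b := rfl

theorem qv_nil : qv [] = 1 := rfl

theorem qv_of_rel {a b : List Burger}
    (hab : burgerRel (FreeMonoid.ofList a) (FreeMonoid.ofList b)) : qv a = qv b :=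
  (Con.eq _).2 (ConGen.Rel.of _ _ hab)

theorem rel_cC : qv [c] * qv [C] = 1 :=
  qv_of_rel (a := [c, C]) (b := []) (Or.inl ⟨rfl, rfl⟩)

theorem rel_hH : qv [h] * qv [H] = 1 :=
  qv_of_rel (a := [h, H]) (b := []) (Or.inr (Or.inl ⟨rfl, rfl⟩))

theorem rel_cF : qv [c] * qv [F] = 1 :=
  qv_of_rel (a := [c, F]) (b := []) (Or.inr (Or.inr (Or.inl ⟨rfl, rfl⟩)))

theorem rel_hF : qv [h] * qv [F] = 1 :=
  qv_of_rel (a := [h, F]) (b := []) (Or.inr (Or.inr (Or.inr (Or.inl ⟨rfl, rfl⟩))))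

theorem rel_cH : qv [c] * qv [H] = qv [H] * qv [c] :=
  qv_of_rel (a := [c, H]) (b := [H, c])
    (Or.inr (Or.inr (Or.inr (Or.inr (Or.inl ⟨rfl, rfl⟩)))))

theorem rel_hC : qv [h] * qv [C] = qv [C] * qv [h] :=
  qv_of_rel (a := [h, C]) (b := [C, h])
    (Or.inr (Or.inr (Or.inr (Or.inr (Or.inr ⟨rfl, rfl⟩)))))

theorem burger_cases {x : Burger} (hx : x.isBurgerSym = true) : x = c ∨ x = h := by
  cases x <;> simp_all [isBurgerSym]

theorem stack_C (B : List Burger) (hB : ∀ x ∈ B, x.isBurgerSym = true) :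
    qv B.reverse * qv [C] =
      if c ∈ B then qv (B.erase c).reverse else qv [C] * qv B.reverse := by
  induction B with
  | nil => simp [qv_nil]
  | cons y B ih =>
    have ih' := ih (fun x hx => hB x (List.mem_cons_of_mem _ hx))
    rcases burger_cases (hB y List.mem_cons_self) with rfl | rfl
    · simp [qv_append, mul_assoc, rel_cC]
    · simp only [List.reverse_cons, qv_append, mul_assoc, rel_hC]
      rw [← mul_assoc, ih']
      by_cases hc : c ∈ B
      · simp [hc, qv_append]
      · simp [hc, mul_assoc]

theorem stack_H (B : List Burger) (hB : ∀ x ∈ B, x.isBurgerSym = true) :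
    qv B.reverse * qv [H] =
      if h ∈ B then qv (B.erase h).reverse else qv [H] * qv B.reverse := by
  induction B with
  | nil => simp [qv_nil]
  | cons y B ih =>
    have ih' := ih (fun x hx => hB x (List.mem_cons_of_mem _ hx))
    rcases burger_cases (hB y List.mem_cons_self) with rfl | rfl
    · simp only [List.reverse_cons, qv_append, mul_assoc, rel_cH]
      rw [← mul_assoc, ih']
      by_cases hc : h ∈ B
      · simp [hc, qv_append]
      · simp [hc, mul_assoc]
    · simp [qv_append, mul_assoc, rel_hH]

/-- Valid states: orders on the left, burgers on the right. -/
def Good (s : List Burger × List Burger) : Prop :=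
  (∀ x ∈ s.1, x.isOrderSym = true) ∧ (∀ x ∈ s.2, x.isBurgerSym = true)

theorem good_step {s : List Burger × List Burger} (hs : Good s) (x : Burger) :
    Good (stepRev s x) := by
  obtain ⟨O, B⟩ := s
  obtain ⟨h1, h2⟩ := hs
  simp only at h1 h2
  cases x
  · exact ⟨h1, by simpa [stepRev, isBurgerSym] using h2⟩
  · exact ⟨h1, by simpa [stepRev, isBurgerSym] using h2⟩
  · by_cases hc : c ∈ B
    · simp only [stepRev, hc, if_true]
      exact ⟨h1, fun x hx => h2 x (List.mem_of_mem_erase hx)⟩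
    · simp only [stepRev, hc, if_false]
      exact ⟨by simpa [isOrderSym, isBurgerSym] using h1, h2⟩
  · by_cases hc : h ∈ B
    · simp only [stepRev, hc, if_true]
      exact ⟨h1, fun x hx => h2 x (List.mem_of_mem_erase hx)⟩
    · simp only [stepRev, hc, if_false]
      exact ⟨by simpa [isOrderSym, isBurgerSym] using h1, h2⟩
  · by_cases hc : B = []
    · simp only [stepRev, hc, if_true]
      exact ⟨by simpa [isOrderSym, isBurgerSym] using h1, by simp⟩
    · simp only [stepRev, hc, if_false]
      exact ⟨h1, fun x hx => h2 x (List.mem_of_mem_tail hx)⟩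

/-- Value of a state in the quotient. -/
def sv (s : List Burger × List Burger) : (conGen burgerRel).Quotient :=
  qv s.1.reverse * qv s.2.reverse

theorem sv_step {s : List Burger × List Burger} (hs : Good s) (x : Burger) :
    sv (stepRev s x) = sv s * qv [x] := by
  obtain ⟨O, B⟩ := s
  obtain ⟨-, h2⟩ := hs
  simp only at h2
  cases x
  · simp [stepRev, sv, qv_append, mul_assoc]
  · simp [stepRev, sv, qv_append, mul_assoc]
  · simp only [sv, mul_assoc, stack_C B h2, stepRev]
    split_ifs <;> simp [qv_append, mul_assoc]
  · simp only [sv, mul_assoc, stack_H B h2, stepRev]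
    split_ifs <;> simp [qv_append, mul_assoc]
  · cases B with
    | nil => simp [sv, stepRev, qv_append, qv_nil]
    | cons y B =>
      rcases burger_cases (h2 y List.mem_cons_self) with rfl | rfl
      · simp [sv, stepRev, qv_append, mul_assoc, rel_cF]
      · simp [sv, stepRev, qv_append, mul_assoc, rel_hF]

theorem fold_spec (w : List Burger) (s : List Burger × List Burger) (hs : Good s) :
    Good (w.foldl stepRev s) ∧ sv (w.foldl stepRev s) = sv s * qv w := by
  induction w generalizing s with
  | nil => exact ⟨hs, by simp [qv_nil]⟩
  | cons x w ih =>
    obtain ⟨g, e⟩ := ih _ (good_step hs x)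
    refine ⟨g, ?_⟩
    rw [List.foldl_cons, e, sv_step hs, mul_assoc, ← qv_append]
    rfl

theorem good_nil : Good ([], []) := ⟨by simp, by simp⟩

theorem isReduced_reduce (w : List Burger) : IsReduced (reduce w) := by
  obtain ⟨g1, g2⟩ := (fold_spec w _ good_nil).1
  exact ⟨_, _, rfl, fun x hx => g1 x (List.mem_reverse.1 hx),
    fun x hx => g2 x (List.mem_reverse.1 hx)⟩

theorem qv_reduce (w : List Burger) : qv (reduce w) = qv w := by
  have e := (fold_spec w _ good_nil).2
  have e1 : sv ([], []) = 1 := by simp [sv, qv_nil]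
  rw [e1, one_mul] at e
  exact e

/-- Words acting identically on all states. -/
def actCon : Con (FreeMonoid Burger) where
  r x y := ∀ s, x.toList.foldl stepRev s = y.toList.foldl stepRev s
  iseqv := ⟨fun _ _ => rfl, fun h s => (h s).symm, fun h k s => (h s).trans (k s)⟩
  mul' := by
    intro a b a' b' h1 h2 s
    simp only [FreeMonoid.toList_mul, List.foldl_append]
    rw [h1, h2]

theorem conGen_le_act : conGen burgerRel ≤ actCon := by
  refine Con.conGen_le.2 ?_
  rintro x y (⟨rfl, rfl⟩ | ⟨rfl, rfl⟩ | ⟨rfl, rfl⟩ | ⟨rfl, rfl⟩ | ⟨rfl, rfl⟩ | ⟨rfl, rfl⟩) <;>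
    rintro ⟨O, B⟩
  · simp [stepRev]
  · simp [stepRev]
  · simp [stepRev]
  · simp [stepRev]
  · by_cases hB : h ∈ B <;> simp [stepRev, hB]
  · by_cases hB : c ∈ B <;> simp [stepRev, hB]

theorem reduce_congr {x y : FreeMonoid Burger} (hxy : conGen burgerRel x y) :
    reduce x.toList = reduce y.toList := by
  have e := conGen_le_act hxy ([], [])
  unfold reduce
  rw [e]

theorem fold_orders (o O : List Burger) (ho : ∀ x ∈ o, x.isOrderSym = true) :
    o.foldl stepRev (O, []) = (o.reverse ++ O, []) := by
  induction o generalizing O with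
  | nil => rfl
  | cons x o ih =>
    have hx := ho x List.mem_cons_self
    have ih' := fun O => ih O (fun x hx => ho x (List.mem_cons_of_mem _ hx))
    cases x <;> simp_all [stepRev, isOrderSym, isBurgerSym]

theorem fold_burgers (b O B : List Burger) (hb : ∀ x ∈ b, x.isBurgerSym = true) :
    b.foldl stepRev (O, B) = (O, b.reverse ++ B) := by
  induction b generalizing B with
  | nil => rfl
  | cons x b ih =>
    have hx := hb x List.mem_cons_self
    have ih' := fun B => ih B (fun x hx => hb x (List.mem_cons_of_mem _ hx))
    cases x <;> simp_all [stepRev, isBurgerSym]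

theorem reduce_of_isReduced {w : List Burger} (hw : IsReduced w) : reduce w = w := by
  obtain ⟨o, b, rfl, ho, hb⟩ := hw
  simp [reduce, fold_orders o [] ho, fold_burgers b _ [] hb]

theorem rel_reduce (W : FreeMonoid Burger) :
    conGen burgerRel W (FreeMonoid.ofList (reduce W.toList)) :=
  (Con.eq _).1 (qv_reduce W.toList).symm

end Burger

/-- Every word over Θ is equivalent, modulo the smallest monoid congruence generated by
the cancellation and commutation relations, to exactly one reduced word; consequently the
quotient monoid is in bijection with the set of reduced words. -/
theorem unique_reduced_word :
    (∀ W : FreeMonoid Burger, ∃! V : FreeMonoid Burger,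
        IsReduced (FreeMonoid.toList V) ∧ conGen burgerRel W V) ∧
    Nonempty ((conGen burgerRel).Quotient ≃
        {V : FreeMonoid Burger // IsReduced (FreeMonoid.toList V)}) := by
  refine ⟨fun W => ⟨FreeMonoid.ofList (reduce W.toList),
    ⟨isReduced_reduce _, rel_reduce W⟩, ?_⟩, ⟨?_⟩⟩
  · rintro V ⟨hV, hWV⟩
    have e := reduce_congr hWV
    rw [reduce_of_isReduced hV] at e
    exact e.symm
  · refine (Equiv.ofBijective (fun V => ((V.1 : FreeMonoid Burger) :
      (conGen burgerRel).Quotient)) ⟨?_, ?_⟩).symm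
    · rintro ⟨V, hV⟩ ⟨V', hV'⟩ hVV
      have e := reduce_congr ((Con.eq _).1 hVV)
      rw [reduce_of_isReduced hV, reduce_of_isReduced hV'] at e
      exact Subtype.ext e
    · intro q
      induction q using Con.induction_on with
      | H W => exact ⟨⟨FreeMonoid.ofList (reduce W.toList), isReduced_reduce _⟩,
          qv_reduce W.toList⟩
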